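/- Let $m \geq 1$ and $\boldsymbol{\sigma} \in \{0,1\}^m$, and let $l$ be the number of indices $i$ with $\sigma_i = 0$. Then the $L_2$ discrepancy of the shifted Hammersley point set satisfies $(2^m L_2(\mathcal{H}_m(\boldsymbol{\sigma})))^2 = \frac{m^2}{64} - \frac{19m}{192} - \frac{lm}{16} + \frac{l^2}{16} + \frac{l}{4} + \frac{3}{8} + \frac{m}{16 \cdot 2^m} - \frac{l}{8 \cdot 2^m} + \frac{1}{4 \cdot 2^m} - \frac{1}{72 \cdot 4^m}$. -/

import Mathlib

/-!
Expanding the square of the local discrepancy and integrating term by term gives Warnock's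
formula (`warnock`): with `N = 2 ^ m`, the integral equals
`∑ p, ∑ q, (1 - max xₚ x_q) (1 - max yₚ y_q) - N / 2 * ∑ p, (1 - xₚ²) (1 - yₚ²) + N² / 9`.
It remains to evaluate finite sums, by induction on `m`. Appending a digit `b` to `t` and `c` to
the shift turns the point `(x, y)` into `((x + b) / 2, y + (b ⊕ c) / 2 ^ (m + 1))`, so every
moment `∑ xⁱ yʲ` with `i, j ≤ 2` satisfies a recursion involving moments of lower or equal order
only. The shift enters through `bal`, the number of zeros minus the number of ones of `σ`.

The essential sum is `∑ p, ∑ q, max xₚ x_q * max yₚ y_q` (`sum_max_mul_max`). If the digits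
appended to `p` and `q` agree, both maxima change by a common amount. If they differ, the new
first coordinates are ordered by the new digits alone, while the old second coordinates, which
are `2⁻ᵐ`-separated (`hamY_gap`), still decide the order of the new ones (`max_hamY_snoc`). The
sum over one of the two points can then be evaluated by equidistribution of the second
coordinates (`sum_below`, `sum_max_hamY`), and moments of a single point remain.
-/

open Finset

/-- Distance to the nearest integer. -/
noncomputable def dnn (x : ℝ) : ℝ := |x - round x|

/-- Real value of a bit. -/
def bitr (b : Bool) : ℝ := if b then 1 else 0

/-- First coordinate of a Hammersley point: t_m/2 + ... + t_1/2^m. -/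
noncomputable def hamX (m : ℕ) (t : Fin m → Bool) : ℝ :=
  ∑ j : Fin m, bitr (t j) / 2 ^ (m - j.val)

/-- Second coordinate of a shifted Hammersley point: s_1/2 + ... + s_m/2^m with s_j = t_j ⊕ σ_j. -/
noncomputable def hamY (m : ℕ) (σ t : Fin m → Bool) : ℝ :=
  ∑ j : Fin m, bitr (xor (t j) (σ j)) / 2 ^ (j.val + 1)

/-- Local discrepancy of the shifted Hammersley point set H_m(σ). -/
noncomputable def Δham (m : ℕ) (σ : Fin m → Bool) (α β : ℝ) : ℝ :=
  ((Finset.univ.filter (fun t : Fin m → Bool => hamX m t < α ∧ hamY m σ t < β)).card : ℝ)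
    - 2 ^ m * α * β

/-- digit i (1-based) of an m-digit vector, with value false outside 1..m. -/
def dig (m : ℕ) (a : Fin m → Bool) (i : ℕ) : Bool :=
  if h : 1 ≤ i ∧ i ≤ m then a ⟨i - 1, by omega⟩ else false

/-- The m-bit real number with binary digits a: ∑ a_j 2^{-j}. -/
noncomputable def mval (m : ℕ) (a : Fin m → Bool) : ℝ :=
  ∑ j : Fin m, bitr (a j) / 2 ^ (j.val + 1)

/-- The index function j(u) associated with digits a of α, digits b of β, and shift τ. -/
def jfun (m : ℕ) (a b τ : Fin m → Bool) (u : ℕ) : ℕ :=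
  Nat.findGreatest (fun j => dig m a (m + 1 - j) ≠ xor (dig m b j) (dig m τ j)) u

/-- Smallest m-bit number ≥ α. -/
noncomputable def upm (m : ℕ) (α : ℝ) : ℝ := (⌈2 ^ m * α⌉ : ℝ) / 2 ^ m

/-- Local discrepancy of the symmetrized Hammersley point set H_m(σ) ∪ H_m(σ*) (multiset union). -/
noncomputable def Δsym (m : ℕ) (σ : Fin m → Bool) (α β : ℝ) : ℝ :=
  (((Finset.univ.filter (fun t : Fin m → Bool => hamX m t < α ∧ hamY m σ t < β)).card : ℝ)
    + ((Finset.univ.filter (fun t : Fin m → Bool =>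
        hamX m t < α ∧ hamY m (fun j => !(σ j)) t < β)).card : ℝ))
    - 2 ^ (m + 1) * α * β

/-! ### Warnock's formula -/

/-- The indicator function of the open half line `(c, ∞)`. -/
noncomputable def stepFn (c t : ℝ) : ℝ := if c < t then 1 else 0

lemma stepFn_mul_stepFn (a b t : ℝ) : stepFn a t * stepFn b t = stepFn (max a b) t := by
  unfold stepFn
  by_cases h1 : a < t <;> by_cases h2 : b < t <;> simp [h1, h2]

lemma intervalIntegrable_stepFn_mul_pow (c : ℝ) (k : ℕ) (a b : ℝ) :
    IntervalIntegrable (fun t => stepFn c t * t ^ k) MeasureTheory.volume a b := by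
  have h : IntervalIntegrable (stepFn c) MeasureTheory.volume a b := by
    apply Monotone.intervalIntegrable
    intro s t hst
    unfold stepFn
    split_ifs with h1 h2 <;> first | exact absurd (h1.trans_le hst) h2 | norm_num
  exact h.mul_continuousOn (by fun_prop)

lemma integral_stepFn_mul_pow (c : ℝ) (h0 : 0 ≤ c) (h1 : c ≤ 1) (k : ℕ) :
    ∫ t in (0:ℝ)..1, stepFn c t * t ^ k = (1 - c ^ (k + 1)) / (k + 1) := by
  rw [← intervalIntegral.integral_add_adjacent_intervals
    (intervalIntegrable_stepFn_mul_pow c k 0 c) (intervalIntegrable_stepFn_mul_pow c k c 1)]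
  have e1 : ∫ t in (0:ℝ)..c, stepFn c t * t ^ k = ∫ t in (0:ℝ)..c, (0:ℝ) := by
    apply intervalIntegral.integral_congr
    intro t ht
    rw [Set.uIcc_of_le h0] at ht
    simp [stepFn, not_lt.mpr ht.2]
  have e2 : ∫ t in c..(1:ℝ), stepFn c t * t ^ k = ∫ t in c..(1:ℝ), t ^ k := by
    apply intervalIntegral.integral_congr_ae
    refine Filter.Eventually.of_forall fun t ht => ?_
    rw [Set.uIoc_of_le h1] at ht
    simp [stepFn, ht.1]
  rw [e1, e2, integral_pow]
  simp

/-- Warnock's formula: expanding the square of the local discrepancy gives a finite sum of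
products of a function of `α` and a function of `β`, each integrated explicitly. -/
lemma warnock {ι : Type*} [Fintype ι] (X Y : ι → ℝ) (N : ℝ)
    (hX : ∀ p, 0 ≤ X p ∧ X p ≤ 1) (hY : ∀ p, 0 ≤ Y p ∧ Y p ≤ 1) :
    ∫ α in (0:ℝ)..1, ∫ β in (0:ℝ)..1,
        ((∑ p, stepFn (X p) α * stepFn (Y p) β) - N * α * β) ^ 2
      = (∑ p, ∑ q, (1 - max (X p) (X q)) * (1 - max (Y p) (Y q)))
        - N / 2 * (∑ p, (1 - X p ^ 2) * (1 - Y p ^ 2)) + N ^ 2 / 9 := by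
  have expand : ∀ α β : ℝ,
      ((∑ p, stepFn (X p) α * stepFn (Y p) β) - N * α * β) ^ 2
      = (∑ r : ι × ι, (stepFn (max (X r.1) (X r.2)) α * α ^ 0)
            * (stepFn (max (Y r.1) (Y r.2)) β * β ^ 0))
        - (∑ p, (2 * N * (stepFn (X p) α * α ^ 1)) * (stepFn (Y p) β * β ^ 1))
        + (N ^ 2 * α ^ 2) * β ^ 2 := by
    intro α β
    rw [Fintype.sum_prod_type, sub_sq, sq (∑ p, _), Finset.sum_mul_sum]
    congr 1
    · congr 1
      · refine Finset.sum_congr rfl fun p _ => Finset.sum_congr rfl fun q _ => ?_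
        simp only [← stepFn_mul_stepFn]
        ring
      · rw [Finset.mul_sum, Finset.sum_mul]
        exact Finset.sum_congr rfl fun p _ => by ring
    · ring
  have inner : ∀ α : ℝ, ∫ β in (0:ℝ)..1,
        ((∑ p, stepFn (X p) α * stepFn (Y p) β) - N * α * β) ^ 2
      = (∑ r : ι × ι, (1 - max (Y r.1) (Y r.2)) * (stepFn (max (X r.1) (X r.2)) α * α ^ 0))
        - (∑ p, (N * (1 - Y p ^ 2)) * (stepFn (X p) α * α ^ 1)) + N ^ 2 / 3 * α ^ 2 := by
    intro α
    simp only [expand]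
    have i1 : ∀ r ∈ (Finset.univ : Finset (ι × ι)), IntervalIntegrable
        (fun β => (stepFn (max (X r.1) (X r.2)) α * α ^ 0)
            * (stepFn (max (Y r.1) (Y r.2)) β * β ^ 0)) MeasureTheory.volume 0 1 :=
      fun r _ => (intervalIntegrable_stepFn_mul_pow _ _ _ _).const_mul _
    have i2 : ∀ p ∈ (Finset.univ : Finset ι), IntervalIntegrable
        (fun β => (2 * N * (stepFn (X p) α * α ^ 1)) * (stepFn (Y p) β * β ^ 1))
          MeasureTheory.volume 0 1 :=
      fun r _ => (intervalIntegrable_stepFn_mul_pow _ _ _ _).const_mul _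
    rw [intervalIntegral.integral_add ?_ ?_, intervalIntegral.integral_sub ?_ ?_,
      intervalIntegral.integral_finsetSum i1, intervalIntegral.integral_finsetSum i2]
    · simp only [intervalIntegral.integral_const_mul, integral_pow]
      congr 1
      · congr 1
        · refine Finset.sum_congr rfl fun r _ => ?_
          rw [integral_stepFn_mul_pow _ (le_max_of_le_left (hY _).1) (max_le (hY _).2 (hY _).2)]
          push_cast
          ring
        · refine Finset.sum_congr rfl fun p _ => ?_
          rw [integral_stepFn_mul_pow _ (hY _).1 (hY _).2]
          push_cast
          ring
      · norm_num
        ring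
    · simpa only [Finset.sum_fn] using IntervalIntegrable.sum _ i1
    · simpa only [Finset.sum_fn] using IntervalIntegrable.sum _ i2
    · simpa only [Finset.sum_fn] using
        (IntervalIntegrable.sum _ i1).sub (IntervalIntegrable.sum _ i2)
    · exact Continuous.intervalIntegrable (by fun_prop) _ _
  simp only [inner]
  have i1 : ∀ r ∈ (Finset.univ : Finset (ι × ι)), IntervalIntegrable
      (fun α => (1 - max (Y r.1) (Y r.2)) * (stepFn (max (X r.1) (X r.2)) α * α ^ 0))
        MeasureTheory.volume 0 1 :=
    fun r _ => (intervalIntegrable_stepFn_mul_pow _ _ _ _).const_mul _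
  have i2 : ∀ p ∈ (Finset.univ : Finset ι), IntervalIntegrable
      (fun α => (N * (1 - Y p ^ 2)) * (stepFn (X p) α * α ^ 1)) MeasureTheory.volume 0 1 :=
    fun r _ => (intervalIntegrable_stepFn_mul_pow _ _ _ _).const_mul _
  rw [intervalIntegral.integral_add ?_ ?_, intervalIntegral.integral_sub ?_ ?_,
    intervalIntegral.integral_finsetSum i1, intervalIntegral.integral_finsetSum i2]
  · simp only [intervalIntegral.integral_const_mul, integral_pow]
    congr 1
    · congr 1
      · rw [Fintype.sum_prod_type]
        refine Finset.sum_congr rfl fun p _ => Finset.sum_congr rfl fun q _ => ?_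
        rw [integral_stepFn_mul_pow _ (le_max_of_le_left (hX _).1) (max_le (hX _).2 (hX _).2)]
        push_cast
        ring
      · rw [Finset.mul_sum]
        refine Finset.sum_congr rfl fun p _ => ?_
        rw [integral_stepFn_mul_pow _ (hX _).1 (hX _).2]
        push_cast
        ring
    · norm_num
      ring
  · simpa only [Finset.sum_fn] using IntervalIntegrable.sum _ i1
  · simpa only [Finset.sum_fn] using IntervalIntegrable.sum _ i2
  · simpa only [Finset.sum_fn] using
      (IntervalIntegrable.sum _ i1).sub (IntervalIntegrable.sum _ i2)
  · exact Continuous.intervalIntegrable (by fun_prop) _ _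

/-! ### Appending a digit -/

lemma sum_snoc {m : ℕ} (f : (Fin (m + 1) → Bool) → ℝ) :
    ∑ t, f t = ∑ t : Fin m → Bool,
      (f (Fin.snoc (α := fun _ => Bool) t false) + f (Fin.snoc (α := fun _ => Bool) t true)) := by
  rw [← (Fin.snocEquiv (fun _ : Fin (m + 1) => Bool)).sum_comp, Fintype.sum_prod_type_right]
  refine Finset.sum_congr rfl fun t _ => ?_
  rw [Fintype.sum_bool, add_comm]
  rfl

lemma exists_snoc {m : ℕ} (σ : Fin (m + 1) → Bool) :
    ∃ (τ : Fin m → Bool) (c : Bool), σ = Fin.snoc (α := fun _ => Bool) τ c :=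
  ⟨Fin.init σ, σ (Fin.last m), (Fin.snoc_init_self σ).symm⟩

lemma hamX_snoc {m : ℕ} (t : Fin m → Bool) (b : Bool) :
    hamX (m + 1) (Fin.snoc (α := fun _ => Bool) t b) = (hamX m t + bitr b) / 2 := by
  unfold hamX
  rw [Fin.sum_univ_castSucc, add_div, Finset.sum_div]
  congr 1
  · refine Finset.sum_congr rfl fun j _ => ?_
    have : m + 1 - (j.castSucc).val = (m - j.val) + 1 := by
      have := j.isLt
      simp only [Fin.val_castSucc]
      omega
    rw [Fin.snoc_castSucc (α := fun _ => Bool), this, pow_succ, div_mul_eq_div_div]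
  · rw [Fin.snoc_last (α := fun _ => Bool)]
    simp

lemma hamY_snoc {m : ℕ} (σ t : Fin m → Bool) (c b : Bool) :
    hamY (m + 1) (Fin.snoc (α := fun _ => Bool) σ c) (Fin.snoc (α := fun _ => Bool) t b)
      = hamY m σ t + bitr (xor b c) / 2 ^ (m + 1) := by
  unfold hamY
  rw [Fin.sum_univ_castSucc]
  congr 1
  · refine Finset.sum_congr rfl fun j _ => ?_
    simp only [Fin.snoc_castSucc (α := fun _ => Bool), Fin.val_castSucc]
  · simp only [Fin.snoc_last (α := fun _ => Bool), Fin.val_last]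

lemma bitr_false : bitr false = 0 := rfl
lemma bitr_true : bitr true = 1 := rfl

lemma bitr_mem (b : Bool) : 0 ≤ bitr b ∧ bitr b ≤ 1 := by
  cases b <;> norm_num [bitr]

lemma hamX_mem (m : ℕ) (t : Fin m → Bool) : 0 ≤ hamX m t ∧ hamX m t ≤ 1 := by
  induction m with
  | zero => simp [hamX]
  | succ m ih =>
    obtain ⟨t, b, rfl⟩ := exists_snoc t
    have := ih t
    have := bitr_mem b
    rw [hamX_snoc]
    constructor <;> linarith

lemma hamY_mem (m : ℕ) (σ t : Fin m → Bool) :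
    0 ≤ hamY m σ t ∧ hamY m σ t ≤ 1 - 1 / 2 ^ m := by
  induction m with
  | zero => simp [hamY]
  | succ m ih =>
    obtain ⟨t, b, rfl⟩ := exists_snoc t
    obtain ⟨σ, c, rfl⟩ := exists_snoc σ
    obtain ⟨h0, h1⟩ := ih σ t
    obtain ⟨b0, b1⟩ := bitr_mem (xor b c)
    have hh : (0:ℝ) < 1 / 2 ^ (m + 1) := by positivity
    have e : (1:ℝ) / 2 ^ m = 2 * (1 / 2 ^ (m + 1)) := by rw [pow_succ]; field_simp
    rw [hamY_snoc, div_eq_mul_one_div]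
    constructor <;> nlinarith

/-- Distinct points have second coordinates at distance at least `2⁻ᵐ`, so that appending one
further digit does not change the order of the second coordinates. -/
lemma hamY_gap (m : ℕ) (σ p q : Fin m → Bool) (h : p ≠ q) :
    hamY m σ p + 1 / 2 ^ m ≤ hamY m σ q ∨ hamY m σ q + 1 / 2 ^ m ≤ hamY m σ p := by
  induction m with
  | zero => exact absurd (Subsingleton.elim p q) h
  | succ m ih =>
    obtain ⟨p, b, rfl⟩ := exists_snoc p
    obtain ⟨q, d, rfl⟩ := exists_snoc q
    obtain ⟨σ, c, rfl⟩ := exists_snoc σ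
    have hh : (0:ℝ) < 1 / 2 ^ (m + 1) := by positivity
    have e : (1:ℝ) / 2 ^ m = 2 * (1 / 2 ^ (m + 1)) := by rw [pow_succ]; field_simp
    simp only [hamY_snoc]
    rw [div_eq_mul_one_div (bitr _), div_eq_mul_one_div (bitr (xor d c))]
    by_cases hpq : p = q
    · subst hpq
      have hbd : b ≠ d := fun hbd => h (by rw [hbd])
      cases b <;> cases d <;> cases c <;> simp [bitr] at hbd ⊢
    · obtain ⟨b0, b1⟩ := bitr_mem (xor b c)
      obtain ⟨d0, d1⟩ := bitr_mem (xor d c)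
      rcases ih σ p q hpq with h' | h'
      · left; nlinarith
      · right; nlinarith

/-! ### Comparing second coordinates -/

/-- The indicator that the point `q` lies strictly below the point `p`. -/
noncomputable def below (m : ℕ) (σ p q : Fin m → Bool) : ℝ :=
  if hamY m σ q < hamY m σ p then 1 else 0

lemma below_add_below (m : ℕ) (σ p q : Fin m → Bool) :
    below m σ p q + below m σ q p + (if p = q then 1 else 0) = 1 := by
  have hh : (0:ℝ) < 1 / 2 ^ m := by positivity
  unfold below
  by_cases h : p = q
  · simp [h]
  · rcases hamY_gap m σ p q h with h' | h'
    · rw [if_neg (by linarith), if_pos (by linarith), if_neg h]; norm_num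
    · rw [if_pos (by linarith), if_neg (by linarith), if_neg h]; norm_num

/-- Increments `a` and `b` not exceeding the separation `2⁻ᵐ` change the larger second
coordinate by the increment of the point which is already larger; only for a point paired with
itself do the two increments compete. -/
lemma max_hamY_add (m : ℕ) (σ p q : Fin m → Bool) (a b : ℝ)
    (ha : 0 ≤ a ∧ a ≤ 1 / 2 ^ m) (hb : 0 ≤ b ∧ b ≤ 1 / 2 ^ m) :
    max (hamY m σ p + a) (hamY m σ q + b) = max (hamY m σ p) (hamY m σ q)
      + a * below m σ p q + b * below m σ q p + max a b * (if p = q then 1 else 0) := by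
  have hh : (0:ℝ) < 1 / 2 ^ m := by positivity
  unfold below
  by_cases h : p = q
  · subst h
    simp [max_add_add_left]
  · rcases hamY_gap m σ p q h with h' | h'
    · rw [if_neg (by linarith), if_pos (by linarith), if_neg h, max_eq_right (by linarith),
        max_eq_right (by linarith)]
      ring
    · rw [if_pos (by linarith), if_neg (by linarith), if_neg h, max_eq_left (by linarith),
        max_eq_left (by linarith)]
      ring

lemma below_snoc (m : ℕ) (σ p q : Fin m → Bool) (c b d : Bool) :
    below (m + 1) (Fin.snoc (α := fun _ => Bool) σ c) (Fin.snoc (α := fun _ => Bool) p b)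
        (Fin.snoc (α := fun _ => Bool) q d)
      = below m σ p q
        + (if xor b c = true ∧ xor d c = false then 1 else 0) * (if p = q then 1 else 0) := by
  have hh : (0:ℝ) < 1 / 2 ^ (m + 1) := by positivity
  have e : (1:ℝ) / 2 ^ m = 2 * (1 / 2 ^ (m + 1)) := by rw [pow_succ]; field_simp
  unfold below
  simp only [hamY_snoc]
  rw [div_eq_mul_one_div (bitr _), div_eq_mul_one_div (bitr (xor b c))]
  by_cases h : p = q
  · subst h
    cases b <;> cases d <;> cases c <;> simp [bitr]
  · obtain ⟨b0, b1⟩ := bitr_mem (xor b c)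
    obtain ⟨d0, d1⟩ := bitr_mem (xor d c)
    rcases hamY_gap m σ p q h with h' | h'
    · rw [if_neg (by nlinarith), if_neg (by nlinarith), if_neg h]; norm_num
    · rw [if_pos (by nlinarith), if_pos (by nlinarith), if_neg h]; norm_num

lemma sum_one (m : ℕ) : ∑ _t : Fin m → Bool, (1:ℝ) = 2 ^ m := by simp

/-- The second coordinates are equidistributed: exactly `2ᵐ y` points lie below height `y`, for
the height `y` of any point. -/
lemma sum_below (m : ℕ) (σ p : Fin m → Bool) :
    ∑ q, below m σ p q = 2 ^ m * hamY m σ p := by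
  induction m with
  | zero => simp [below, hamY]
  | succ m ih =>
    obtain ⟨p, b, rfl⟩ := exists_snoc p
    obtain ⟨σ, c, rfl⟩ := exists_snoc σ
    rw [sum_snoc]
    simp only [below_snoc, hamY_snoc, Finset.sum_add_distrib, ih, ← Finset.mul_sum,
      Finset.sum_ite_eq, Finset.mem_univ, if_true]
    rw [pow_succ]
    cases b <;> cases c <;> simp [bitr] <;> field_simp <;> ring

lemma sum_below' (m : ℕ) (σ p : Fin m → Bool) :
    ∑ q, below m σ q p = 2 ^ m - 1 - 2 ^ m * hamY m σ p := by
  have h := Finset.sum_congr (rfl : (Finset.univ : Finset (Fin m → Bool)) = _)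
    fun q _ => below_add_below m σ p q
  simp only [Finset.sum_add_distrib, sum_below, sum_one, Finset.sum_ite_eq, Finset.mem_univ,
    if_true] at h
  linarith

lemma max_hamY_snoc (m : ℕ) (σ p q : Fin m → Bool) (c b d : Bool) :
    max (hamY (m + 1) (Fin.snoc (α := fun _ => Bool) σ c) (Fin.snoc (α := fun _ => Bool) p b))
        (hamY (m + 1) (Fin.snoc (α := fun _ => Bool) σ c) (Fin.snoc (α := fun _ => Bool) q d))
      = max (hamY m σ p) (hamY m σ q)
        + (bitr (xor b c) * below m σ p q + bitr (xor d c) * below m σ q p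
          + max (bitr (xor b c)) (bitr (xor d c)) * (if p = q then 1 else 0)) / 2 ^ (m + 1) := by
  have key : ∀ b : Bool, 0 ≤ bitr b / 2 ^ (m + 1) ∧ bitr b / 2 ^ (m + 1) ≤ 1 / 2 ^ m := by
    intro b
    obtain ⟨b0, b1⟩ := bitr_mem b
    refine ⟨by positivity, ?_⟩
    apply div_le_div₀ zero_le_one b1 (by positivity)
    exact pow_le_pow_right₀ (by norm_num) (by omega)
  rw [hamY_snoc, hamY_snoc, max_hamY_add m σ p q _ _ (key _) (key _),
    max_div_div_right (by positivity : (0:ℝ) ≤ 2 ^ (m + 1))]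
  ring

lemma sum_max_hamY (m : ℕ) (σ p : Fin m → Bool) :
    ∑ q, max (hamY m σ p) (hamY m σ q)
      = (2 ^ m - 1) / 2 + 2 ^ m * hamY m σ p ^ 2 / 2 + hamY m σ p / 2 := by
  induction m with
  | zero => simp [hamY]
  | succ m ih =>
    obtain ⟨p, b, rfl⟩ := exists_snoc p
    obtain ⟨σ, c, rfl⟩ := exists_snoc σ
    rw [sum_snoc]
    simp only [max_hamY_snoc]
    simp only [hamY_snoc, Finset.sum_add_distrib, ih, ← Finset.mul_sum,
      ← Finset.sum_div, sum_below, sum_below', Finset.sum_ite_eq, Finset.mem_univ, if_true]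
    rw [pow_succ]
    cases b <;> cases c <;> simp [bitr] <;> field_simp <;> ring

/-! ### Moments of the point set -/

lemma sum_hamX (m : ℕ) : ∑ p, hamX m p = (2 ^ m - 1) / 2 := by
  induction m with
  | zero => simp [hamX]
  | succ m ih =>
    rw [sum_snoc]
    have e : ∀ p : Fin m → Bool, hamX (m + 1) (Fin.snoc (α := fun _ => Bool) p false)
        + hamX (m + 1) (Fin.snoc (α := fun _ => Bool) p true) = hamX m p + 1 / 2 * 1 := by
      intro p
      rw [hamX_snoc, hamX_snoc, bitr_false, bitr_true]
      ring
    simp only [e, Finset.sum_add_distrib, ← Finset.mul_sum, ih, sum_one]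
    ring

lemma sum_hamX_sq (m : ℕ) :
    ∑ p, hamX m p ^ 2 = (2 ^ m - 1) * (2 * 2 ^ m - 1) / (6 * 2 ^ m) := by
  induction m with
  | zero => simp [hamX]
  | succ m ih =>
    rw [sum_snoc]
    have e : ∀ p : Fin m → Bool, hamX (m + 1) (Fin.snoc (α := fun _ => Bool) p false) ^ 2
        + hamX (m + 1) (Fin.snoc (α := fun _ => Bool) p true) ^ 2
          = 1 / 2 * hamX m p ^ 2 + 1 / 2 * hamX m p + 1 / 4 * 1 := by
      intro p
      rw [hamX_snoc, hamX_snoc, bitr_false, bitr_true]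
      ring
    simp only [e, Finset.sum_add_distrib, ← Finset.mul_sum, ih, sum_one, sum_hamX]
    rw [pow_succ]
    field_simp
    ring

lemma sum_hamY (m : ℕ) (σ : Fin m → Bool) : ∑ p, hamY m σ p = (2 ^ m - 1) / 2 := by
  induction m with
  | zero => simp [hamY]
  | succ m ih =>
    obtain ⟨σ, c, rfl⟩ := exists_snoc σ
    rw [sum_snoc]
    have e : ∀ p : Fin m → Bool,
        hamY (m + 1) (Fin.snoc (α := fun _ => Bool) σ c) (Fin.snoc (α := fun _ => Bool) p false)
        + hamY (m + 1) (Fin.snoc (α := fun _ => Bool) σ c) (Fin.snoc (α := fun _ => Bool) p true)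
          = 2 * hamY m σ p + 1 / 2 ^ (m + 1) * 1 := by
      intro p
      rw [hamY_snoc, hamY_snoc]
      cases c <;> simp [bitr] <;> ring
    simp only [e, Finset.sum_add_distrib, ← Finset.mul_sum, ih, sum_one]
    rw [pow_succ]
    field_simp
    ring

lemma sum_hamY_sq (m : ℕ) (σ : Fin m → Bool) :
    ∑ p, hamY m σ p ^ 2 = (2 ^ m - 1) * (2 * 2 ^ m - 1) / (6 * 2 ^ m) := by
  induction m with
  | zero => simp [hamY]
  | succ m ih =>
    obtain ⟨σ, c, rfl⟩ := exists_snoc σ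
    rw [sum_snoc]
    have e : ∀ p : Fin m → Bool,
        hamY (m + 1) (Fin.snoc (α := fun _ => Bool) σ c)
            (Fin.snoc (α := fun _ => Bool) p false) ^ 2
        + hamY (m + 1) (Fin.snoc (α := fun _ => Bool) σ c)
            (Fin.snoc (α := fun _ => Bool) p true) ^ 2
          = 2 * hamY m σ p ^ 2 + 1 / 2 ^ m * hamY m σ p + 1 / (4 * (2 ^ m) ^ 2) * 1 := by
      intro p
      rw [hamY_snoc, hamY_snoc, pow_succ]
      cases c <;> simp [bitr] <;> field_simp <;> ring
    simp only [e, Finset.sum_add_distrib, ← Finset.mul_sum, ih, sum_one, sum_hamY]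
    rw [pow_succ]
    field_simp
    ring

/-- The number of vanishing shift digits minus the number of nonvanishing ones. -/
def bal (m : ℕ) (σ : Fin m → Bool) : ℝ := ∑ j : Fin m, (1 - 2 * bitr (σ j))

lemma bal_snoc {m : ℕ} (σ : Fin m → Bool) (c : Bool) :
    bal (m + 1) (Fin.snoc (α := fun _ => Bool) σ c) = bal m σ + (1 - 2 * bitr c) := by
  unfold bal
  rw [Fin.sum_univ_castSucc]
  simp only [Fin.snoc_castSucc (α := fun _ => Bool), Fin.snoc_last (α := fun _ => Bool)]

lemma bal_eq (m : ℕ) (σ : Fin m → Bool) :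
    bal m σ = 2 * ((Finset.univ.filter (fun i => σ i = false)).card : ℝ) - m := by
  have h : ∀ j, 1 - 2 * bitr (σ j) = 2 * (if σ j = false then 1 else 0) - 1 := by
    intro j
    cases σ j <;> norm_num [bitr]
  unfold bal
  rw [Finset.sum_congr rfl fun j _ => h j, Finset.sum_sub_distrib, ← Finset.mul_sum,
    Finset.sum_boole]
  simp

lemma sum_hamX_mul_hamY (m : ℕ) (σ : Fin m → Bool) :
    ∑ p, hamX m p * hamY m σ p = 1 / (4 * 2 ^ m) - 1 / 2 + bal m σ / 8 + 2 ^ m / 4 := by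
  induction m with
  | zero => norm_num [hamX, hamY, bal]
  | succ m ih =>
    obtain ⟨σ, c, rfl⟩ := exists_snoc σ
    rw [sum_snoc, bal_snoc]
    have e : ∀ p : Fin m → Bool,
        hamX (m + 1) (Fin.snoc (α := fun _ => Bool) p false)
          * hamY (m + 1) (Fin.snoc (α := fun _ => Bool) σ c)
            (Fin.snoc (α := fun _ => Bool) p false)
        + hamX (m + 1) (Fin.snoc (α := fun _ => Bool) p true)
          * hamY (m + 1) (Fin.snoc (α := fun _ => Bool) σ c)
            (Fin.snoc (α := fun _ => Bool) p true)
          = 1 * (hamX m p * hamY m σ p) + 1 / 2 * hamY m σ p + 1 / (4 * 2 ^ m) * hamX m p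
            + (1 - bitr c) / (4 * 2 ^ m) * 1 := by
      intro p
      simp only [hamX_snoc, hamY_snoc, pow_succ]
      cases c <;> simp [bitr] <;> field_simp <;> ring
    simp only [e, Finset.sum_add_distrib, ← Finset.mul_sum, ih, sum_one, sum_hamX, sum_hamY]
    rw [pow_succ]
    field_simp
    ring

lemma sum_hamX_mul_hamY_sq (m : ℕ) (σ : Fin m → Bool) :
    ∑ p, hamX m p * hamY m σ p ^ 2 = -1 / (12 * (2 ^ m) ^ 2) + 1 / (3 * 2 ^ m)
      - bal m σ / (8 * 2 ^ m) - 5 / 12 + bal m σ / 8 + 2 ^ m / 6 := by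
  induction m with
  | zero => norm_num [hamX, hamY, bal]
  | succ m ih =>
    obtain ⟨σ, c, rfl⟩ := exists_snoc σ
    rw [sum_snoc, bal_snoc]
    have e : ∀ p : Fin m → Bool,
        hamX (m + 1) (Fin.snoc (α := fun _ => Bool) p false)
          * hamY (m + 1) (Fin.snoc (α := fun _ => Bool) σ c)
            (Fin.snoc (α := fun _ => Bool) p false) ^ 2
        + hamX (m + 1) (Fin.snoc (α := fun _ => Bool) p true)
          * hamY (m + 1) (Fin.snoc (α := fun _ => Bool) σ c)
            (Fin.snoc (α := fun _ => Bool) p true) ^ 2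
          = 1 * (hamX m p * hamY m σ p ^ 2) + 1 / (2 * 2 ^ m) * (hamX m p * hamY m σ p)
            + 1 / (8 * (2 ^ m) ^ 2) * hamX m p + 1 / 2 * hamY m σ p ^ 2
            + (1 - bitr c) / (2 * 2 ^ m) * hamY m σ p
            + (1 - bitr c) / (8 * (2 ^ m) ^ 2) * 1 := by
      intro p
      simp only [hamX_snoc, hamY_snoc, pow_succ]
      cases c <;> simp [bitr] <;> field_simp <;> ring
    simp only [e, Finset.sum_add_distrib, ← Finset.mul_sum, ih, sum_one, sum_hamX, sum_hamY,
      sum_hamX_mul_hamY, sum_hamY_sq]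
    rw [pow_succ]
    field_simp
    ring

lemma sum_hamX_sq_mul_hamY (m : ℕ) (σ : Fin m → Bool) :
    ∑ p, hamX m p ^ 2 * hamY m σ p = -1 / (12 * (2 ^ m) ^ 2) + 1 / (3 * 2 ^ m)
      - bal m σ / (8 * 2 ^ m) - 5 / 12 + bal m σ / 8 + 2 ^ m / 6 := by
  induction m with
  | zero => norm_num [hamX, hamY, bal]
  | succ m ih =>
    obtain ⟨σ, c, rfl⟩ := exists_snoc σ
    rw [sum_snoc, bal_snoc]
    have e : ∀ p : Fin m → Bool,
        hamX (m + 1) (Fin.snoc (α := fun _ => Bool) p false) ^ 2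
          * hamY (m + 1) (Fin.snoc (α := fun _ => Bool) σ c)
            (Fin.snoc (α := fun _ => Bool) p false)
        + hamX (m + 1) (Fin.snoc (α := fun _ => Bool) p true) ^ 2
          * hamY (m + 1) (Fin.snoc (α := fun _ => Bool) σ c)
            (Fin.snoc (α := fun _ => Bool) p true)
          = 1 / 2 * (hamX m p ^ 2 * hamY m σ p) + 1 / 2 * (hamX m p * hamY m σ p)
            + 1 / 4 * hamY m σ p + 1 / (8 * 2 ^ m) * hamX m p ^ 2
            + (1 - bitr c) / (4 * 2 ^ m) * hamX m p
            + (1 - bitr c) / (8 * 2 ^ m) * 1 := by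
      intro p
      simp only [hamX_snoc, hamY_snoc, pow_succ]
      cases c <;> simp [bitr] <;> field_simp <;> ring
    simp only [e, Finset.sum_add_distrib, ← Finset.mul_sum, ih, sum_one, sum_hamX, sum_hamY,
      sum_hamX_mul_hamY, sum_hamX_sq]
    rw [pow_succ]
    field_simp
    ring

lemma sum_hamX_sq_mul_hamY_sq (m : ℕ) (σ : Fin m → Bool) :
    ∑ p, hamX m p ^ 2 * hamY m σ p ^ 2 = 1 / (36 * (2 ^ m) ^ 3) - 1 / (6 * (2 ^ m) ^ 2)
      + bal m σ / (8 * (2 ^ m) ^ 2) + 13 / (36 * 2 ^ m) - bal m σ / (4 * 2 ^ m)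
      + bal m σ ^ 2 / (32 * 2 ^ m) - m / (32 * 2 ^ m) - 1 / 3 + bal m σ / 8 + 2 ^ m / 9 := by
  induction m with
  | zero => norm_num [hamX, hamY, bal]
  | succ m ih =>
    obtain ⟨σ, c, rfl⟩ := exists_snoc σ
    rw [sum_snoc, bal_snoc]
    have e : ∀ p : Fin m → Bool,
        hamX (m + 1) (Fin.snoc (α := fun _ => Bool) p false) ^ 2
          * hamY (m + 1) (Fin.snoc (α := fun _ => Bool) σ c)
            (Fin.snoc (α := fun _ => Bool) p false) ^ 2
        + hamX (m + 1) (Fin.snoc (α := fun _ => Bool) p true) ^ 2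
          * hamY (m + 1) (Fin.snoc (α := fun _ => Bool) σ c)
            (Fin.snoc (α := fun _ => Bool) p true) ^ 2
          = 1 / 2 * (hamX m p ^ 2 * hamY m σ p ^ 2)
            + 1 / (4 * 2 ^ m) * (hamX m p ^ 2 * hamY m σ p)
            + 1 / (16 * (2 ^ m) ^ 2) * hamX m p ^ 2
            + 1 / 2 * (hamX m p * hamY m σ p ^ 2)
            + (1 - bitr c) / (2 * 2 ^ m) * (hamX m p * hamY m σ p)
            + (1 - bitr c) / (8 * (2 ^ m) ^ 2) * hamX m p
            + 1 / 4 * hamY m σ p ^ 2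
            + (1 - bitr c) / (4 * 2 ^ m) * hamY m σ p
            + (1 - bitr c) / (16 * (2 ^ m) ^ 2) * 1 := by
      intro p
      simp only [hamX_snoc, hamY_snoc, pow_succ]
      cases c <;> simp [bitr] <;> field_simp <;> ring
    simp only [e, Finset.sum_add_distrib, ← Finset.mul_sum, ih, sum_one, sum_hamX, sum_hamY,
      sum_hamX_mul_hamY, sum_hamX_sq, sum_hamY_sq, sum_hamX_sq_mul_hamY, sum_hamX_mul_hamY_sq]
    rw [pow_succ]
    cases c <;> simp only [bitr_false, bitr_true] <;> push_cast <;> field_simp <;> ring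

/-! ### Sums of maxima over pairs of points -/

lemma max_hamX_snoc {m : ℕ} (p q : Fin m → Bool) :
    max (hamX (m + 1) (Fin.snoc (α := fun _ => Bool) p false))
        (hamX (m + 1) (Fin.snoc (α := fun _ => Bool) q false)) = max (hamX m p) (hamX m q) / 2 ∧
    max (hamX (m + 1) (Fin.snoc (α := fun _ => Bool) p true))
        (hamX (m + 1) (Fin.snoc (α := fun _ => Bool) q true))
          = (max (hamX m p) (hamX m q) + 1) / 2 ∧
    max (hamX (m + 1) (Fin.snoc (α := fun _ => Bool) p true))
        (hamX (m + 1) (Fin.snoc (α := fun _ => Bool) q false)) = (hamX m p + 1) / 2 ∧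
    max (hamX (m + 1) (Fin.snoc (α := fun _ => Bool) p false))
        (hamX (m + 1) (Fin.snoc (α := fun _ => Bool) q true)) = (hamX m q + 1) / 2 := by
  simp only [hamX_snoc, bitr_false, bitr_true, add_zero]
  have hp := hamX_mem m p
  have hq := hamX_mem m q
  refine ⟨?_, ?_, ?_, ?_⟩
  · rw [max_div_div_right (by norm_num)]
  · rw [max_div_div_right (by norm_num), max_add_add_right]
  · rw [max_eq_left (by linarith)]
  · rw [max_eq_right (by linarith)]

lemma sum_max_hamX (m : ℕ) :
    ∑ p, ∑ q, max (hamX m p) (hamX m q) = 2 * (2 ^ m) ^ 2 / 3 - 2 ^ m / 2 - 1 / 6 := by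
  induction m with
  | zero => norm_num [hamX]
  | succ m ih =>
    rw [sum_snoc]
    simp only [sum_snoc (m := m), max_hamX_snoc]
    have e : ∀ p : Fin m → Bool,
        (∑ q, (max (hamX m p) (hamX m q) / 2 + (hamX m q + 1) / 2)
          + ∑ q, ((hamX m p + 1) / 2 + (max (hamX m p) (hamX m q) + 1) / 2))
        = 1 * (∑ q, max (hamX m p) (hamX m q)) + 2 ^ m / 2 * hamX m p
          + (5 * 2 ^ m / 4 + (2 ^ m - 1) / 4 + 2 ^ m / 4) * 1 := by
      intro p
      simp only [Finset.sum_add_distrib, ← Finset.sum_div, sum_hamX, Finset.sum_const,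
        Finset.card_univ, Fintype.card_fun, Fintype.card_bool, Fintype.card_fin, nsmul_eq_mul]
      push_cast
      ring
    rw [Finset.sum_congr rfl fun p _ => e p]
    simp only [Finset.sum_add_distrib, ← Finset.mul_sum, ih, sum_one, sum_hamX]
    rw [pow_succ]
    ring

lemma sum_sum_max_hamY (m : ℕ) (σ : Fin m → Bool) :
    ∑ p, ∑ q, max (hamY m σ p) (hamY m σ q) = 2 * (2 ^ m) ^ 2 / 3 - 2 ^ m / 2 - 1 / 6 := by
  have e : ∀ p : Fin m → Bool, (2 ^ m - 1) / 2 + 2 ^ m * hamY m σ p ^ 2 / 2 + hamY m σ p / 2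
      = (2 ^ m - 1) / 2 * 1 + 2 ^ m / 2 * hamY m σ p ^ 2 + 1 / 2 * hamY m σ p := fun p => by ring
  simp only [sum_max_hamY, e, Finset.sum_add_distrib, ← Finset.mul_sum, sum_one, sum_hamY,
    sum_hamY_sq]
  field_simp
  ring

/-- The mixed pair sum. When the two appended digits agree, both maxima are those of the shorter
pair up to a common change; when they differ, the new maximum of the first coordinates depends
only on the point with digit `1`, and the sum over the other point is evaluated by
`sum_max_hamY`, `sum_below` and `sum_below'`, which leaves moments of a single point. -/
lemma sum_max_mul_max (m : ℕ) (σ : Fin m → Bool) :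
    ∑ p, ∑ q, max (hamX m p) (hamX m q) * max (hamY m σ p) (hamY m σ q)
      = 1 / (6 * 2 ^ m) + 1 / 18 + bal m σ ^ 2 / 32 + m / 96 - 2 * 2 ^ m / 3
        + bal m σ * 2 ^ m / 16 + 4 * (2 ^ m) ^ 2 / 9 := by
  induction m with
  | zero => norm_num [hamX, hamY, bal]
  | succ m ih =>
    obtain ⟨σ, c, rfl⟩ := exists_snoc σ
    rw [sum_snoc, bal_snoc]
    simp only [sum_snoc (m := m), max_hamX_snoc, max_hamY_snoc, ← Finset.sum_add_distrib]
    -- `F p q` is the contribution of the digit `1` for `p` and the digit `0` for `q`.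
    set F : (Fin m → Bool) → (Fin m → Bool) → ℝ := fun p q =>
      (hamX m p + 1) / 2 * (max (hamY m σ p) (hamY m σ q)
        + (1 - (1 - bitr c) * below m σ q p - bitr c * below m σ p q) / (2 * 2 ^ m)) with hF
    have hcomm : ∑ p, ∑ q, F q p = ∑ p, ∑ q, F p q := Finset.sum_comm
    have hsum : ∀ p, ∑ q, F p q
        = 2 ^ m / 4 * (hamX m p * hamY m σ p ^ 2) + 2 ^ m / 4 * hamY m σ p ^ 2
          + (1 / 2 - bitr c / 2) * (hamX m p * hamY m σ p)
          + (1 / 2 - bitr c / 2) * hamY m σ p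
          + (2 ^ m / 4 + (1 - bitr c) / (4 * 2 ^ m) - (1 - bitr c) / 4) * hamX m p
          + (2 ^ m / 4 + (1 - bitr c) / (4 * 2 ^ m) - (1 - bitr c) / 4) * 1 := by
      intro p
      simp only [hF, ← Finset.mul_sum, Finset.sum_add_distrib, ← Finset.sum_div,
        Finset.sum_sub_distrib, sum_max_hamY, sum_below, sum_below', sum_one]
      field_simp
      ring
    have hFF : ∑ p, ∑ q, F p q = _ := Finset.sum_congr rfl fun p _ => hsum p
    simp only [Finset.sum_add_distrib, ← Finset.mul_sum, sum_one, sum_hamX, sum_hamY,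
      sum_hamX_mul_hamY, sum_hamX_mul_hamY_sq, sum_hamY_sq] at hFF
    rw [Finset.sum_congr rfl fun p _ => Finset.sum_congr rfl fun q _ =>
      (?_ : _ = max (hamX m p) (hamX m q) * max (hamY m σ p) (hamY m σ q)
        + 1 / 2 * max (hamY m σ p) (hamY m σ q)
        + 1 / (4 * 2 ^ m) * max (hamX m p) (hamX m q)
        + (1 - bitr c) / (4 * 2 ^ m) * 1 + F p q + F q p)]
    · simp only [Finset.sum_add_distrib, ← Finset.mul_sum, ih, sum_one, sum_max_hamX,
        sum_sum_max_hamY, hcomm, hFF]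
      rw [show ∑ _p : Fin m → Bool, (2:ℝ) ^ m = (2 ^ m) ^ 2 by simp [sq]]
      rw [pow_succ]
      cases c <;> simp only [bitr_false, bitr_true] <;> push_cast <;> field_simp <;> ring
    · have hE : (if p = q then (1:ℝ) else 0) = 1 - below m σ p q - below m σ q p := by
        have := below_add_below m σ p q
        linarith
      simp only [hF, hE, max_comm (hamY m σ q) (hamY m σ p)]
      cases c <;> simp [bitr, pow_succ] <;> field_simp <;> ring

/-! ### The integral of the squared discrepancy -/

lemma Δham_eq (m : ℕ) (σ : Fin m → Bool) (α β : ℝ) :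
    Δham m σ α β
      = (∑ p, stepFn (hamX m p) α * stepFn (hamY m σ p) β) - 2 ^ m * α * β := by
  unfold Δham stepFn
  rw [Finset.card_filter]
  push_cast
  congr 1
  refine Finset.sum_congr rfl fun p _ => ?_
  by_cases h1 : hamX m p < α <;> by_cases h2 : hamY m σ p < β <;> simp [h1, h2]

theorem stmt9 (m : ℕ) (hm : 1 ≤ m) (σ : Fin m → Bool)
    (l : ℕ) (hl : l = (Finset.univ.filter (fun i => σ i = false)).card) :
    (∫ α in (0:ℝ)..1, ∫ β in (0:ℝ)..1, (Δham m σ α β) ^ 2)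
      = (m : ℝ) ^ 2 / 64 - 19 * m / 192 - (l : ℝ) * m / 16 + (l : ℝ) ^ 2 / 16 + (l : ℝ) / 4
          + 3 / 8 + (m : ℝ) / (16 * 2 ^ m) - (l : ℝ) / (8 * 2 ^ m) + 1 / (4 * 2 ^ m)
          - 1 / (72 * 4 ^ m) := by
  have hY : ∀ p, 0 ≤ hamY m σ p ∧ hamY m σ p ≤ 1 := fun p => by
    have := hamY_mem m σ p
    have hh : (0:ℝ) < 1 / 2 ^ m := by positivity
    exact ⟨this.1, by linarith⟩
  simp only [Δham_eq]
  rw [warnock (hamX m) (hamY m σ) (2 ^ m) (hamX_mem m) hY]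
  have e1 : ∀ p q, (1 - max (hamX m p) (hamX m q)) * (1 - max (hamY m σ p) (hamY m σ q))
      = 1 - max (hamX m p) (hamX m q) - max (hamY m σ p) (hamY m σ q)
        + max (hamX m p) (hamX m q) * max (hamY m σ p) (hamY m σ q) := fun p q => by ring
  have e2 : ∀ p, (1 - hamX m p ^ 2) * (1 - hamY m σ p ^ 2)
      = 1 - hamX m p ^ 2 - hamY m σ p ^ 2 + hamX m p ^ 2 * hamY m σ p ^ 2 := fun p => by ring
  simp only [e1, e2, Finset.sum_add_distrib, Finset.sum_sub_distrib, sum_one, sum_max_hamX,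
    sum_sum_max_hamY, sum_max_mul_max, sum_hamX_sq, sum_hamY_sq, sum_hamX_sq_mul_hamY_sq]
  rw [show ∑ _p : Fin m → Bool, (2:ℝ) ^ m = (2 ^ m) ^ 2 by simp [sq], bal_eq, ← hl,
    show (4:ℝ) ^ m = (2 ^ m) ^ 2 by rw [← pow_mul, mul_comm, pow_mul]; norm_num]
  field_simp
  ring
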